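/- Let X ∈ ℝ^{m×n}, W ∈ ℝ^{m×r}, H ∈ ℝ^{r×n} be real matrices and λ a real scalar. Fix indices a ∈ {1,…,r}, b ∈ {1,…,n} and let E^{ab} ∈ ℝ^{r×n} be the matrix with entry 1 in position (a,b) and 0 elsewhere. Then the function t ↦ O(W, H + t·E^{ab}) is differentiable at t = 0 and its derivative there equals (−2·Wᵀ·X + 2·Wᵀ·W·H − 4λ·H·Xᵀ·X + 4λ²·H·Hᵀ·H)_{ab}; that is, the gradient of O with respect to H is −2WᵀX + 2WᵀWH − 4λHXᵀX + 4λ²HHᵀH. -/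

import Mathlib

open Matrix

/-- Squared Frobenius norm of a real matrix. -/
noncomputable def frobSq {m n : ℕ} (A : Matrix (Fin m) (Fin n) ℝ) : ℝ :=
  ∑ i, ∑ j, (A i j) ^ 2

/-- The DSP-NMF objective `O(W, H) = ‖X − W·H‖²_F + ‖Xᵀ·X − λ·Hᵀ·H‖²_F`. -/
noncomputable def dspObjective {m n r : ℕ} (X : Matrix (Fin m) (Fin n) ℝ) (lam : ℝ)
    (W : Matrix (Fin m) (Fin r) ℝ) (H : Matrix (Fin r) (Fin n) ℝ) : ℝ :=
  frobSq (X - W * H) + frobSq (Xᵀ * X - lam • (Hᵀ * H))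

/-!
With respect to the Frobenius inner product `⟨A, B⟩ = tr (Aᵀ B)`, the derivative of `‖A‖²_F` is
`2⟨A, A'⟩`. Along a curve `H`, the two residuals have derivatives `-W H'` and
`-λ(H'ᵀ H + Hᵀ H')`. Since `XᵀX - λHᵀH` is symmetric, `H'ᵀ H` and `Hᵀ H'` pair equally with it,
and moving `W` and `H` across the inner product exhibits the gradient as the factor paired
with `H'`.
-/

section Calculus

variable {𝕜 E m n : Type*} [NontriviallyNormedField 𝕜] [NormedAddCommGroup E]
  [NormedSpace 𝕜 E] [Finite m] [Finite n]

theorem hasDerivAt_matrix {A : 𝕜 → Matrix m n E} {A' : Matrix m n E} {t : 𝕜} :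
    HasDerivAt A A' t ↔ ∀ i j, HasDerivAt (fun s => A s i j) (A' i j) t := by
  cases nonempty_fintype m
  cases nonempty_fintype n
  exact hasDerivAt_pi.trans (forall_congr' fun _ => hasDerivAt_pi)

theorem hasDerivAt_matrix_add_smul (A B : Matrix m n E) (t : 𝕜) :
    HasDerivAt (fun s : 𝕜 => A + s • B) B t :=
  hasDerivAt_matrix.2 fun i j => by
    simpa using ((hasDerivAt_id t).smul_const (B i j)).const_add (A i j)

theorem hasDerivAt_matrix_transpose {A : 𝕜 → Matrix m n E} {A' : Matrix m n E} {t : 𝕜}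
    (hA : HasDerivAt A A' t) : HasDerivAt (fun s => (A s)ᵀ) A'ᵀ t :=
  hasDerivAt_matrix.2 fun i j => hasDerivAt_matrix.1 hA j i

theorem hasDerivAt_matrix_mul {p R : Type*} [Fintype p] [NormedRing R] [NormedAlgebra 𝕜 R]
    {A : 𝕜 → Matrix m p R} {A' : Matrix m p R} {B : 𝕜 → Matrix p n R} {B' : Matrix p n R} {t : 𝕜}
    (hA : HasDerivAt A A' t) (hB : HasDerivAt B B' t) :
    HasDerivAt (fun s => A s * B s) (A' * B t + A t * B') t := by
  rw [hasDerivAt_matrix] at hA hB ⊢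
  intro i j
  simp only [mul_apply, Matrix.add_apply, ← Finset.sum_add_distrib]
  exact HasDerivAt.fun_sum fun k _ => (hA i k).fun_mul (hB k j)

end Calculus

theorem transpose_mul_self_isSymm {m n R : Type*} [Fintype m] [NonUnitalCommSemiring R]
    (A : Matrix m n R) : (Aᵀ * A).IsSymm := by
  rw [IsSymm, transpose_mul, transpose_transpose]

theorem trace_mul_transpose_mul_add_of_isSymm {m n R : Type*} [Fintype m] [Fintype n]
    [CommSemiring R] {S : Matrix n n R} (hS : S.IsSymm) (A B : Matrix m n R) :
    (S * (Bᵀ * A + Aᵀ * B)).trace = 2 * ((A * S)ᵀ * B).trace := by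
  have hcross : (S * (Bᵀ * A)).trace = (S * (Aᵀ * B)).trace := by
    rw [← trace_transpose, transpose_mul, transpose_mul, transpose_transpose, hS.eq, trace_mul_comm]
  rw [Matrix.mul_add, trace_add, hcross, ← two_mul, transpose_mul, hS.eq, Matrix.mul_assoc]

section Gradient

variable {m n r : ℕ}

theorem hasDerivAt_frobSq {A : ℝ → Matrix (Fin m) (Fin n) ℝ} {A' : Matrix (Fin m) (Fin n) ℝ}
    {t : ℝ} (hA : HasDerivAt A A' t) :
    HasDerivAt (fun s => frobSq (A s)) (2 * ((A t)ᵀ * A').trace) t := by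
  have hsum : HasDerivAt (fun s => frobSq (A s)) (∑ i, ∑ j, 2 * A t i j * A' i j) t :=
    HasDerivAt.fun_sum fun i _ => HasDerivAt.fun_sum fun j _ => by
      simpa using (hasDerivAt_matrix.1 hA i j).fun_pow 2
  refine hsum.congr_deriv ?_
  rw [Finset.sum_comm]
  simp [trace, mul_apply, Finset.mul_sum, mul_assoc]

theorem hasDerivAt_frobSq_sub_mul (X : Matrix (Fin m) (Fin n) ℝ) (W : Matrix (Fin m) (Fin r) ℝ)
    {H : ℝ → Matrix (Fin r) (Fin n) ℝ} {H' : Matrix (Fin r) (Fin n) ℝ} {t : ℝ}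
    (hH : HasDerivAt H H' t) :
    HasDerivAt (fun s => frobSq (X - W * H s))
      (((2 : ℝ) • (Wᵀ * (W * H t - X)))ᵀ * H').trace t := by
  have hW : HasDerivAt (fun _ => W) 0 t := hasDerivAt_matrix.2 fun i j => hasDerivAt_const t (W i j)
  have hWH : HasDerivAt (fun s => W * H s) (W * H') t := by
    simpa using hasDerivAt_matrix_mul hW hH
  have hres : HasDerivAt (fun s => X - W * H s) (-(W * H')) t :=
    hasDerivAt_matrix.2 fun i j => (hasDerivAt_matrix.1 hWH i j).const_sub (X i j)
  refine (hasDerivAt_frobSq hres).congr_deriv ?_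
  calc 2 * ((X - W * H t)ᵀ * -(W * H')).trace
      = 2 * ((W * H t - X)ᵀ * (W * H')).trace := by
        rw [Matrix.mul_neg, ← Matrix.neg_mul, ← transpose_neg, neg_sub]
    _ = (((2 : ℝ) • (Wᵀ * (W * H t - X)))ᵀ * H').trace := by
        simp only [transpose_smul, transpose_mul, transpose_transpose, Matrix.smul_mul,
          Matrix.mul_assoc, trace_smul, smul_eq_mul]

theorem hasDerivAt_frobSq_sub_smul_gram {S : Matrix (Fin n) (Fin n) ℝ} (hS : S.IsSymm) (c : ℝ)
    {H : ℝ → Matrix (Fin r) (Fin n) ℝ} {H' : Matrix (Fin r) (Fin n) ℝ} {t : ℝ}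
    (hH : HasDerivAt H H' t) :
    HasDerivAt (fun s => frobSq (S - c • ((H s)ᵀ * H s)))
      (((4 * c) • (H t * (c • ((H t)ᵀ * H t) - S)))ᵀ * H').trace t := by
  have hgram : HasDerivAt (fun s => (H s)ᵀ * H s) (H'ᵀ * H t + (H t)ᵀ * H') t :=
    hasDerivAt_matrix_mul (hasDerivAt_matrix_transpose hH) hH
  have hres : HasDerivAt (fun s => S - c • ((H s)ᵀ * H s))
      (-(c • (H'ᵀ * H t + (H t)ᵀ * H'))) t :=
    hasDerivAt_matrix.2 fun i j =>
      ((hasDerivAt_matrix.1 hgram i j).const_mul c).const_sub (S i j)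
  refine (hasDerivAt_frobSq hres).congr_deriv ?_
  have hsymm : (c • ((H t)ᵀ * H t) - S).IsSymm :=
    ((transpose_mul_self_isSymm (H t)).smul c).sub hS
  calc 2 * ((S - c • ((H t)ᵀ * H t))ᵀ * -(c • (H'ᵀ * H t + (H t)ᵀ * H'))).trace
      = 2 * c * ((c • ((H t)ᵀ * H t) - S) * (H'ᵀ * H t + (H t)ᵀ * H')).trace := by
        rw [Matrix.mul_neg, ← Matrix.neg_mul, ← transpose_neg, neg_sub, hsymm.eq, Matrix.mul_smul,
          trace_smul, smul_eq_mul, mul_assoc]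
    _ = 4 * c * ((H t * (c • ((H t)ᵀ * H t) - S))ᵀ * H').trace := by
        rw [trace_mul_transpose_mul_add_of_isSymm hsymm]
        ring
    _ = (((4 * c) • (H t * (c • ((H t)ᵀ * H t) - S)))ᵀ * H').trace := by
        rw [transpose_smul, Matrix.smul_mul, trace_smul, smul_eq_mul]

/-- The partial gradient `∂O/∂H` of the DSP-NMF objective, with respect to the Frobenius inner
product `⟨A, B⟩ = tr (Aᵀ B)`. -/
def dspGradientH (X : Matrix (Fin m) (Fin n) ℝ) (lam : ℝ) (W : Matrix (Fin m) (Fin r) ℝ)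
    (H : Matrix (Fin r) (Fin n) ℝ) : Matrix (Fin r) (Fin n) ℝ :=
  (-2 : ℝ) • (Wᵀ * X) + (2 : ℝ) • (Wᵀ * W * H)
    - (4 * lam) • (H * Xᵀ * X) + (4 * lam ^ 2) • (H * Hᵀ * H)

theorem dspGradientH_eq_add (X : Matrix (Fin m) (Fin n) ℝ) (lam : ℝ)
    (W : Matrix (Fin m) (Fin r) ℝ) (H : Matrix (Fin r) (Fin n) ℝ) :
    dspGradientH X lam W H =
      (2 : ℝ) • (Wᵀ * (W * H - X)) + (4 * lam) • (H * (lam • (Hᵀ * H) - Xᵀ * X)) := by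
  simp only [dspGradientH, Matrix.mul_sub, Matrix.mul_smul, Matrix.mul_assoc]
  module

theorem dspnmf_gradient_H_general (X : Matrix (Fin m) (Fin n) ℝ) (W : Matrix (Fin m) (Fin r) ℝ)
    (lam : ℝ) {H : ℝ → Matrix (Fin r) (Fin n) ℝ} {H' : Matrix (Fin r) (Fin n) ℝ} {t : ℝ}
    (hH : HasDerivAt H H' t) :
    HasDerivAt (fun s => dspObjective X lam W (H s))
      ((dspGradientH X lam W (H t))ᵀ * H').trace t := by
  rw [dspGradientH_eq_add, transpose_add, Matrix.add_mul, trace_add]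
  exact (hasDerivAt_frobSq_sub_mul X W hH).fun_add
    (hasDerivAt_frobSq_sub_smul_gram (transpose_mul_self_isSymm X) lam hH)

end Gradient

/-- Partial gradient of the DSP-NMF objective with respect to `H` (Appendix A):
`∂O/∂H = −2WᵀX + 2WᵀWH − 4λHXᵀX + 4λ²HHᵀH`, stated entrywise as a derivative
along the standard basis direction `E^{ab}`. -/
theorem dspnmf_gradient_H {m n r : ℕ}
    (X : Matrix (Fin m) (Fin n) ℝ) (W : Matrix (Fin m) (Fin r) ℝ)
    (H : Matrix (Fin r) (Fin n) ℝ) (lam : ℝ) (a : Fin r) (b : Fin n) :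
    HasDerivAt (fun t : ℝ => dspObjective X lam W (H + t • Matrix.single a b 1))
      (-2 * (Wᵀ * X) a b + 2 * (Wᵀ * W * H) a b
        - 4 * lam * (H * Xᵀ * X) a b + 4 * lam ^ 2 * (H * Hᵀ * H) a b) 0 := by
  refine (dspnmf_gradient_H_general X W lam
    (hasDerivAt_matrix_add_smul H (Matrix.single a b 1) 0)).congr_deriv ?_
  simp [trace_mul_single, -transpose_add, -transpose_sub, dspGradientH]
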